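/- For every infinite cardinal λ, the set of ordinals α < λ, considered up to the equivalence relation identifying α and β whenever the Banach spaces C([0,α],ℝ) and C([0,β],ℝ) are isomorphic (i.e. there is a continuous linear bijection with continuous inverse between them), has exactly λ equivalence classes. -/

import Mathlib

open Cardinal

/-- The ordinal interval `[0, α]`, i.e. the set of ordinals `≤ α`, with its (order) topology,
is a compact space. -/
instance (α : Ordinal.{u}) : CompactSpace (Set.Iic α) := by
  rw [← isCompact_iff_compactSpace, ← Set.Icc_bot]
  exact isCompact_Icc

/-- The equivalence relation on ordinals `< λ` identifying `α` and `β` whenever the Banach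
spaces `C([0,α], ℝ)` and `C([0,β], ℝ)` are isomorphic, i.e. there is a continuous linear
bijection with continuous inverse between them. -/
def banachIsoSetoid (lam : Cardinal.{u}) : Setoid {α : Ordinal.{u} // α < lam.ord} where
  r a b := Nonempty (C(Set.Iic a.1, ℝ) ≃L[ℝ] C(Set.Iic b.1, ℝ))
  iseqv :=
    ⟨fun _ => ⟨ContinuousLinearEquiv.refl ℝ _⟩,
     fun ⟨e⟩ => ⟨e.symm⟩,
     fun ⟨e⟩ ⟨f⟩ => ⟨e.trans f⟩⟩

/-!
The Banach spaces `C([0, α], ℝ)` are told apart by Bourgain's `ℓ¹`-index: the rank of the tree of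
finite families in the unit ball that are `δ`-equivalent to the unit vector basis of `ℓ¹`. An
isomorphism preserves this rank up to a change of `δ`.

Let `c` be an uncountable regular cardinal.

* If `α < c`, the index of `C([0, α], ℝ)` is below `c`. Up to a small error a function is described
  by one of fewer than `c` codes, so by regularity a tree of rank `c` would have an infinite branch,
  that is, a sequence in `C([0, α], ℝ)` equivalent to the basis of `ℓ¹`. There is none: by
  induction on `p ≤ α`, a sliding hump along `p` yields normalised combinations of any bounded
  sequence that are uniformly small on `[0, p]`.
* If `ω ^ ξ ≤ γ`, the index of `C([0, γ], ℝ)` is at least `ξ`: for `η < ξ` the interval `[0, γ]`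
  contains two disjoint clopen copies of `[0, ω ^ η]`, and the function equal to `1` on one and to
  `-1` on the other extends every `ℓ¹`-family of `C([0, ω ^ η], ℝ)`.

Hence the isomorphism classes among the ordinals below `c` are bounded in `c`, so by regularity
there are at least `c` of them; for `c = ℵ₀` the dimension takes the place of the index. Every
cardinal below an infinite `λ` lies below a regular cardinal `c ≤ λ`.
-/

namespace BourgainIndex

open Set Topology
open scoped Ordinal

universe u v

section Rank

variable {A B : Type*}

/-- The node `s` of the tree of finite tuples satisfying `T` has rank at least `ξ`, where the rank
of a node is the least ordinal above the ranks of its one-step extensions. -/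
def HasRankGE (T : ∀ n, (Fin n → A) → Prop) (ξ : Ordinal.{u}) {n : ℕ} (s : Fin n → A) : Prop :=
  T n s ∧ ∀ η < ξ, ∃ a : A, HasRankGE T η (Fin.snoc s a : Fin (n + 1) → A)
termination_by ξ

variable {T : ∀ n, (Fin n → A) → Prop} {ξ η : Ordinal.{u}} {n : ℕ}

theorem hasRankGE_iff {s : Fin n → A} :
    HasRankGE T ξ s ↔ T n s ∧ ∀ η < ξ, ∃ a : A, HasRankGE T η (Fin.snoc s a : Fin (n + 1) → A) := by
  rw [HasRankGE]

theorem HasRankGE.anti {s : Fin n → A} (h : HasRankGE T ξ s) (hη : η ≤ ξ) : HasRankGE T η s := by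
  rw [hasRankGE_iff] at h ⊢
  exact ⟨h.1, fun ζ hζ ↦ h.2 ζ (hζ.trans_le hη)⟩

theorem HasRankGE.map {U : ∀ n, (Fin n → B) → Prop} (φ : A → B)
    (hφ : ∀ n (s : Fin n → A), T n s → U n (φ ∘ s)) {s : Fin n → A} (h : HasRankGE T ξ s) :
    HasRankGE U ξ (φ ∘ s) := by
  induction ξ using WellFoundedLT.induction generalizing n s with
  | ind ξ ih =>
    rw [hasRankGE_iff] at h ⊢
    refine ⟨hφ n s h.1, fun η hη ↦ ?_⟩
    obtain ⟨a, ha⟩ := h.2 η hη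
    exact ⟨φ a, by simpa only [Fin.comp_snoc] using ih η hη ha⟩

theorem HasRankGE.cons {a : A} {s : Fin n → A}
    (h : HasRankGE (fun n s ↦ T (n + 1) (Fin.cons a s)) ξ s) :
    HasRankGE T ξ (Fin.cons a s : Fin (n + 1) → A) := by
  induction ξ using WellFoundedLT.induction generalizing n s with
  | ind ξ ih =>
    rw [hasRankGE_iff] at h ⊢
    refine ⟨h.1, fun η hη ↦ ?_⟩
    obtain ⟨b, hb⟩ := h.2 η hη
    exact ⟨b, by simpa only [Fin.cons_snoc_eq_snoc_cons] using ih η hη hb⟩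

theorem exists_seq_of_forall_exists_snoc (h0 : T 0 Fin.elim0)
    (hT : ∀ n (s : Fin n → A), T n s → ∃ a, T (n + 1) (Fin.snoc s a : Fin (n + 1) → A)) :
    ∃ f : ℕ → A, ∀ n, T n (fun i ↦ f i) := by
  obtain ⟨a₀, -⟩ := hT 0 _ h0
  have : Nonempty A := ⟨a₀⟩
  choose! next hnext using hT
  let f : ℕ → A := fun n ↦ Nat.strongRecOn n fun n g ↦ next n fun i ↦ g i i.2
  have hf (n : ℕ) : f n = next n fun i ↦ f i := Nat.strongRecOn_eq _ n
  refine ⟨f, fun n ↦ ?_⟩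
  induction n with
  | zero => exact (Subsingleton.elim Fin.elim0 fun i : Fin 0 ↦ f i) ▸ h0
  | succ n ih =>
    have hsnoc : (fun i : Fin (n + 1) ↦ f i) = Fin.snoc (fun i : Fin n ↦ f i) (f n) :=
      (Fin.snoc_init_self fun i : Fin (n + 1) ↦ f i).symm
    rw [hsnoc, hf n]
    exact hnext n _ ih

theorem exists_lt_ord_forall_le {c : Cardinal.{u}} (hc : c.IsRegular) {D : Type v}
    (hD : lift.{u} #D < lift.{v} c) {F : D → Ordinal.{u}} (hF : ∀ d, F d < c.ord) :
    ∃ β < c.ord, ∀ d, F d ≤ β := by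
  refine ⟨⨆ d, F d, Ordinal.lift_iSup_lt_of_lt_cof ?_ hF, le_ciSup ⟨c.ord, ?_⟩⟩
  · rwa [← Ordinal.lift_cof, hc.cof_ord]
  · rintro _ ⟨d, rfl⟩
    exact (hF d).le

theorem exists_forall_hasRankGE_snoc {c : Cardinal.{u}} (hc : c.IsRegular) {A : Type v}
    {T : ∀ n, (Fin n → A) → Prop} (hA : lift.{u} #A < lift.{v} c) {s : Fin n → A}
    (h : ∀ ξ < c.ord, HasRankGE T ξ s) :
    ∃ a, ∀ ξ < c.ord, HasRankGE T ξ (Fin.snoc s a : Fin (n + 1) → A) := by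
  by_contra! hcon
  choose ξ hξ hnot using hcon
  obtain ⟨β, hβ, hle⟩ := exists_lt_ord_forall_le hc hA hξ
  have hlim : Order.succ β < c.ord := (isSuccLimit_ord hc.aleph0_le).succ_lt hβ
  obtain ⟨a, ha⟩ := (hasRankGE_iff.1 (h _ hlim)).2 β (Order.lt_succ β)
  exact hnot a (ha.anti (hle a))

theorem exists_seq_of_forall_hasRankGE {c : Cardinal.{u}} (hc : c.IsRegular) {A : Type v}
    {T : ∀ n, (Fin n → A) → Prop} (hA : lift.{u} #A < lift.{v} c)
    (h : ∀ ξ < c.ord, HasRankGE T ξ Fin.elim0) : ∃ f : ℕ → A, ∀ n, T n (fun i ↦ f i) := by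
  obtain ⟨f, hf⟩ := exists_seq_of_forall_exists_snoc
    (T := fun _ s ↦ ∀ ξ < c.ord, HasRankGE T ξ s) h
    fun _ _ hs ↦ exists_forall_hasRankGE_snoc hc hA hs
  exact ⟨f, fun n ↦ (hasRankGE_iff.1 (hf n 0 hc.ord_pos)).1⟩

end Rank

section EllOne

variable {ι X Y : Type*} [Fintype ι] [NormedAddCommGroup X] [NormedSpace ℝ X]
  [NormedAddCommGroup Y] [NormedSpace ℝ Y] {δ ε : ℝ}

/-- A finite family in the closed unit ball that dominates the unit vector basis of `ℓ¹` with
constant `δ`. -/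
structure IsEllOneFamily (δ : ℝ) (x : ι → X) : Prop where
  norm_le_one : ∀ i, ‖x i‖ ≤ 1
  le_norm_sum : ∀ c : ι → ℝ, δ * ∑ i, |c i| ≤ ‖∑ i, c i • x i‖

/-- Bourgain's `ℓ¹`-index of `X` for the constant `δ` is at least `ξ`. The index itself is not
defined, as the rank of an ill-founded tree is not an ordinal. -/
def EllOneIndexGE (X : Type*) [NormedAddCommGroup X] [NormedSpace ℝ X] (δ : ℝ)
    (ξ : Ordinal.{u}) : Prop :=
  HasRankGE (fun _ s ↦ IsEllOneFamily δ s) ξ (Fin.elim0 : Fin 0 → X)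

theorem IsEllOneFamily.anti {x : ι → X} (h : IsEllOneFamily δ x) (hε : ε ≤ δ) :
    IsEllOneFamily ε x where
  norm_le_one := h.norm_le_one
  le_norm_sum c := le_trans (by gcongr) (h.le_norm_sum c)

theorem IsEllOneFamily.of_norm_sub_le {x y : ι → X} (hx : IsEllOneFamily δ x)
    (hy : ∀ i, ‖y i‖ ≤ 1) (hxy : ∀ i, ‖x i - y i‖ ≤ ε) : IsEllOneFamily (δ - ε) y where
  norm_le_one := hy
  le_norm_sum c := by
    have hsub : ‖∑ i, c i • x i - ∑ i, c i • y i‖ ≤ ε * ∑ i, |c i| := by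
      rw [← Finset.sum_sub_distrib, Finset.mul_sum]
      refine norm_sum_le_of_le _ fun i _ ↦ ?_
      rw [← smul_sub, norm_smul, Real.norm_eq_abs, mul_comm]
      gcongr
      exact hxy i
    linarith [hx.le_norm_sum c, norm_sub_norm_le (∑ i, c i • x i) (∑ i, c i • y i)]

theorem IsEllOneFamily.comp_linearMap {x : ι → X} (hx : IsEllOneFamily δ x) (φ : X →ₗ[ℝ] Y)
    {K : ℝ} (hK : 0 ≤ K) (hle : ∀ z, ‖φ z‖ ≤ ‖z‖) (hge : ∀ z, K * ‖z‖ ≤ ‖φ z‖) :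
    IsEllOneFamily (K * δ) (φ ∘ x) where
  norm_le_one i := (hle _).trans (hx.norm_le_one i)
  le_norm_sum c :=
    calc K * δ * ∑ i, |c i| = K * (δ * ∑ i, |c i|) := mul_assoc _ _ _
      _ ≤ K * ‖∑ i, c i • x i‖ := by gcongr; exact hx.le_norm_sum c
      _ ≤ ‖φ (∑ i, c i • x i)‖ := hge _
      _ = ‖∑ i, c i • (φ ∘ x) i‖ := by simp

theorem EllOneIndexGE.map {φ : X → Y} (hφ : ∀ n (s : Fin n → X),
    IsEllOneFamily δ s → IsEllOneFamily ε (φ ∘ s)) {ξ : Ordinal.{u}} (h : EllOneIndexGE X δ ξ) :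
    EllOneIndexGE Y ε ξ := by
  have := HasRankGE.map φ hφ h
  rwa [Subsingleton.elim (φ ∘ Fin.elim0) Fin.elim0] at this

theorem EllOneIndexGE.anti {ξ : Ordinal.{u}} (h : EllOneIndexGE X δ ξ) (hε : ε ≤ δ) :
    EllOneIndexGE X ε ξ :=
  h.map (φ := id) fun _ _ hs ↦ hs.anti hε

theorem exists_pos_forall_ellOneIndexGE_of_equiv (e : X ≃L[ℝ] Y) (hδ : 0 < δ) :
    ∃ ε > 0, ∀ ξ : Ordinal.{u}, EllOneIndexGE X δ ξ → EllOneIndexGE Y ε ξ := by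
  set a : ℝ := ‖(e : X →L[ℝ] Y)‖ + 1 with ha
  set b : ℝ := ‖(e.symm : Y →L[ℝ] X)‖ + 1 with hb
  have ha0 : 0 < a := by positivity
  have hb0 : 0 < b := by positivity
  have hupper (x : X) : ‖e x‖ ≤ a * ‖x‖ :=
    (e : X →L[ℝ] Y).le_of_opNorm_le (by simp [ha]) x
  have hlower (x : X) : ‖x‖ ≤ b * ‖e x‖ := by
    simpa using (e.symm : Y →L[ℝ] X).le_of_opNorm_le (show _ ≤ b by simp [hb]) (e x)
  let φ : X →ₗ[ℝ] Y := a⁻¹ • (e : X →ₗ[ℝ] Y)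
  have hφ (x : X) : ‖φ x‖ = a⁻¹ * ‖e x‖ := by simp [φ, norm_smul, abs_of_pos ha0]
  refine ⟨a⁻¹ * b⁻¹ * δ, by positivity, fun ξ h ↦ h.map (φ := φ) fun n s hs ↦
    hs.comp_linearMap φ (by positivity) (fun x ↦ ?_) fun x ↦ ?_⟩
  · rw [hφ, inv_mul_le_iff₀ ha0]
    exact hupper x
  · rw [hφ, mul_assoc]
    gcongr
    rw [inv_mul_le_iff₀ hb0]
    exact hlower x

variable {c : Cardinal.{u}} {D : Type v}

theorem exists_seq_isEllOneFamily (hc : c.IsRegular) (hD : lift.{u} #D < lift.{v} c)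
    {code : X → D} (hcode : ∀ x y, code x = code y → ‖x - y‖ ≤ ε)
    (h : ∀ ξ < c.ord, EllOneIndexGE X δ ξ) :
    ∃ f : ℕ → X, ∀ n, IsEllOneFamily (δ - ε) (fun i : Fin n ↦ f i) := by
  have hrank : ∀ ξ < c.ord, HasRankGE
      (fun _ s ↦ ∃ x, IsEllOneFamily δ x ∧ code ∘ x = s) ξ (Fin.elim0 : Fin 0 → D) :=
    fun ξ hξ ↦ (Subsingleton.elim (code ∘ Fin.elim0) Fin.elim0) ▸
      HasRankGE.map code (fun _ x hx ↦ ⟨x, hx, rfl⟩) (h ξ hξ)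
  obtain ⟨d, hd⟩ := exists_seq_of_forall_hasRankGE hc hD hrank
  choose x hx hxd using hd
  let f : ℕ → X := fun n ↦ x (n + 1) (Fin.last n)
  have hfd (n : ℕ) : code (f n) = d n := congrFun (hxd (n + 1)) (Fin.last n)
  exact ⟨f, fun n ↦ (hx n).of_norm_sub_le (fun i ↦ (hx _).norm_le_one _)
    fun i ↦ hcode _ _ ((congrFun (hxd n) i).trans (hfd i).symm)⟩

theorem exists_lt_ord_forall_not_ellOneIndexGE (hc : c.IsRegular) (hc' : ℵ₀ < c)
    (hD : lift.{u} #D < lift.{v} c)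
    (hcode : ∀ ε > 0, ∃ code : X → D, ∀ x y, code x = code y → ‖x - y‖ ≤ ε)
    (hX : ∀ δ > 0, ∀ f : ℕ → X, ¬ ∀ n, IsEllOneFamily δ (fun i : Fin n ↦ f i)) :
    ∃ ξ < c.ord, ∀ δ > 0, ¬ EllOneIndexGE X δ ξ := by
  have hbound (n : ℕ) : ∃ ξ < c.ord, ¬ EllOneIndexGE X (1 / (n + 1)) ξ := by
    by_contra! hall
    obtain ⟨code, hclose⟩ := hcode (1 / (n + 1) / 2) (by positivity)
    obtain ⟨f, hf⟩ := exists_seq_isEllOneFamily hc hD hclose hall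
    refine hX _ ?_ f hf
    rw [sub_half]
    positivity
  choose ξ hξ hnot using hbound
  obtain ⟨β, hβ, hle⟩ := exists_lt_ord_forall_le hc (by simpa using hc') hξ
  refine ⟨β, hβ, fun δ hδ hidx ↦ ?_⟩
  obtain ⟨n, hn⟩ := exists_nat_one_div_lt hδ
  exact hnot n (HasRankGE.anti (hidx.anti hn.le) (hle n))

/-- The linear combinations of `f N, …, f (M - 1)` whose coefficients have `ℓ¹`-norm `r`. -/
def blockSums (f : ℕ → X) (N M : ℕ) (r : ℝ) : Set X :=
  {x | ∃ c : ℕ → ℝ, ∑ i ∈ Finset.Ico N M, |c i| = r ∧ ∑ i ∈ Finset.Ico N M, c i • f i = x}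

variable {f : ℕ → X} {N M L : ℕ} {r s : ℝ} {x y : X}

theorem zero_mem_blockSums (f : ℕ → X) (N : ℕ) : 0 ∈ blockSums f N N 0 :=
  ⟨0, by simp, by simp⟩

theorem self_mem_blockSums (f : ℕ → X) (N : ℕ) : f N ∈ blockSums f N (N + 1) 1 :=
  ⟨1, by simp, by simp⟩

theorem smul_mem_blockSums (t : ℝ) (hx : x ∈ blockSums f N M r) :
    t • x ∈ blockSums f N M (|t| * r) := by
  obtain ⟨c, rfl, rfl⟩ := hx
  exact ⟨fun i ↦ t * c i, by simp [abs_mul, Finset.mul_sum], by simp [mul_smul, Finset.smul_sum]⟩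

theorem add_mem_blockSums (hNM : N ≤ M) (hML : M ≤ L) (hx : x ∈ blockSums f N M r)
    (hy : y ∈ blockSums f M L s) : x + y ∈ blockSums f N L (r + s) := by
  obtain ⟨a, rfl, rfl⟩ := hx
  obtain ⟨b, rfl, rfl⟩ := hy
  refine ⟨fun i ↦ if i < M then a i else b i, ?_, ?_⟩ <;>
  · rw [← Finset.sum_Ico_consecutive _ hNM hML]
    congr 1 <;> refine Finset.sum_congr rfl fun i hi ↦ ?_
    · simp only [if_pos (Finset.mem_Ico.1 hi).2]
    · simp only [if_neg (Finset.mem_Ico.1 hi).1.not_gt]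

theorem norm_le_of_mem_blockSums (hf : ∀ n, ‖f n‖ ≤ 1) (hx : x ∈ blockSums f N M r) :
    ‖x‖ ≤ r := by
  obtain ⟨c, rfl, rfl⟩ := hx
  refine norm_sum_le_of_le _ fun i _ ↦ ?_
  rw [norm_smul, Real.norm_eq_abs]
  exact mul_le_of_le_one_right (abs_nonneg _) (hf i)

theorem IsEllOneFamily.mul_le_norm_of_mem_blockSums
    (hf : IsEllOneFamily δ (fun i : Fin M ↦ f i)) (hx : x ∈ blockSums f 0 M r) : δ * r ≤ ‖x‖ := by
  obtain ⟨c, rfl, rfl⟩ := hx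
  simp only [← Finset.range_eq_Ico, Finset.sum_range]
  exact hf.le_norm_sum fun i ↦ c i

end EllOne

section ContinuousFunctions

variable {K : Type*} [TopologicalSpace K] [CompactSpace K]

/-- Arbitrarily far out, there are combinations of the `f i` whose coefficients have `ℓ¹`-norm `1`
and which are uniformly small on `t`. -/
def HasSmallBlocksOn (f : ℕ → C(K, ℝ)) (t : Set K) : Prop :=
  ∀ ε > 0, ∀ N, ∃ M ≥ N, ∃ g ∈ blockSums f N M 1, ∀ y ∈ t, |g y| ≤ ε

variable {f : ℕ → C(K, ℝ)} {s t : Set K} {p : K} {ε : ℝ}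

theorem hasSmallBlocksOn_empty (f : ℕ → C(K, ℝ)) : HasSmallBlocksOn f ∅ :=
  fun _ _ N ↦ ⟨N + 1, N.le_succ, f N, self_mem_blockSums f N, by simp⟩

theorem HasSmallBlocksOn.mono (h : HasSmallBlocksOn f t) (hst : s ⊆ t) : HasSmallBlocksOn f s := by
  intro ε hε N
  obtain ⟨M, hM, g, hg, hgt⟩ := h ε hε N
  exact ⟨M, hM, g, hg, fun y hy ↦ hgt y (hst hy)⟩

-- If `g` and `k` are consecutive small blocks, then `k p • g - g p • k` vanishes at `p`.
theorem HasSmallBlocksOn.exists_apply_eq_zero (h : HasSmallBlocksOn f t) (p : K) (hε : 0 < ε)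
    (N : ℕ) : ∃ M ≥ N, ∃ g ∈ blockSums f N M 1, g p = 0 ∧ ∀ y ∈ t, |g y| ≤ ε := by
  obtain ⟨M, hNM, g, hg, hgt⟩ := h ε hε N
  obtain ⟨L, hML, k, hk, hkt⟩ := h ε hε M
  by_cases hgp : g p = 0
  · exact ⟨M, hNM, g, hg, hgp, hgt⟩
  set q := |k p| + |g p|
  have hq0 : 0 < q := by positivity
  have hweights : |k p / q| + |-(g p / q)| = 1 := by
    rw [abs_neg, abs_div, abs_div, abs_of_pos hq0, ← add_div, div_self hq0.ne']
  refine ⟨L, hNM.trans hML, (k p / q) • g + (-(g p / q)) • k, ?_, ?_, fun y hy ↦ ?_⟩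
  · simpa only [mul_one, hweights] using add_mem_blockSums hNM hML
      (smul_mem_blockSums (k p / q) hg) (smul_mem_blockSums (-(g p / q)) hk)
  · simp only [ContinuousMap.add_apply, ContinuousMap.smul_apply, smul_eq_mul]
    ring
  · calc |k p / q * g y + -(g p / q) * k y|
        ≤ |k p / q| * |g y| + |-(g p / q)| * |k y| := by
          simpa only [abs_mul] using abs_add_le (k p / q * g y) (-(g p / q) * k y)
      _ ≤ |k p / q| * ε + |-(g p / q)| * ε := by gcongr <;> simp_all
      _ = ε := by rw [← add_mul, hweights, one_mul]

-- Each new block is small off the set where the previous sum is below `ε`, so only one of the two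
-- summands can exceed `ε` at a given point.
theorem exists_mem_blockSums_abs_le_one_add (hf : ∀ n, ‖f n‖ ≤ 1)
    (h : ∀ U ∈ 𝓝 p, HasSmallBlocksOn f (t \ U)) (hε : 0 < ε) (N m : ℕ) :
    ∃ M ≥ N, ∃ g ∈ blockSums f N M m, g p = 0 ∧ ∀ y ∈ t, |g y| ≤ 1 + m * ε := by
  induction m with
  | zero => exact ⟨N, le_rfl, 0, by simpa using zero_mem_blockSums f N, by simp⟩
  | succ m ih =>
    obtain ⟨M, hNM, g, hg, hgp, hgt⟩ := ih
    have hU : {y | |g y| < ε} ∈ 𝓝 p :=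
      (isOpen_lt (by fun_prop) continuous_const).mem_nhds (by simpa [hgp] using hε)
    obtain ⟨L, hML, k, hk, hkp, hkt⟩ := (h _ hU).exists_apply_eq_zero p hε M
    refine ⟨L, hNM.trans hML, g + k, ?_, by simp [hgp, hkp], fun y hy ↦ ?_⟩
    · simpa only [Nat.cast_succ] using add_mem_blockSums hNM hML hg hk
    have hmε : 0 ≤ m * ε := by positivity
    have hsum : |(g + k) y| ≤ |g y| + |k y| := abs_add_le (g y) (k y)
    rw [Nat.cast_succ]
    by_cases hyU : |g y| < ε
    · have hk1 : |k y| ≤ 1 := (k.norm_coe_le_norm y).trans (norm_le_of_mem_blockSums hf hk)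
      linarith
    · linarith [hgt y hy, hkt y ⟨hy, hyU⟩]

theorem hasSmallBlocksOn_of_forall_nhds (hf : ∀ n, ‖f n‖ ≤ 1)
    (h : ∀ U ∈ 𝓝 p, HasSmallBlocksOn f (t \ U)) : HasSmallBlocksOn f t := by
  intro ε hε N
  obtain ⟨m, hm⟩ := exists_nat_gt (2 / ε)
  have hm0 : (0 : ℝ) < m := lt_trans (by positivity) hm
  obtain ⟨M, hM, g, hg, -, hgt⟩ := exists_mem_blockSums_abs_le_one_add hf h (half_pos hε) N m
  refine ⟨M, hM, (m : ℝ)⁻¹ • g, ?_, fun y hy ↦ ?_⟩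
  · simpa [abs_of_pos hm0, hm0.ne'] using smul_mem_blockSums (m : ℝ)⁻¹ hg
  · rw [ContinuousMap.smul_apply, smul_eq_mul, abs_mul, abs_inv, abs_of_pos hm0,
      inv_mul_le_iff₀ hm0]
    rw [div_lt_iff₀ hε] at hm
    linarith [hgt y hy]

theorem hasSmallBlocksOn_Iic [LinearOrder K] [OrderTopology K] [WellFoundedLT K]
    (hf : ∀ n, ‖f n‖ ≤ 1) (p : K) : HasSmallBlocksOn f (Iic p) := by
  induction p using WellFoundedLT.induction with
  | ind p ih =>
    refine hasSmallBlocksOn_of_forall_nhds (p := p) hf fun U hU ↦ ?_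
    by_cases hp : ∃ q, q < p
    · obtain ⟨q, hq, hqU⟩ := exists_Ioc_subset_of_mem_nhds hU hp
      exact (ih q hq).mono fun y hy ↦ not_lt.1 fun hqy ↦ hy.2 (hqU ⟨hqy, hy.1⟩)
    · refine (hasSmallBlocksOn_empty f).mono fun y hy ↦ hy.2 ?_
      obtain rfl : y = p := hy.1.eq_of_not_lt fun hlt ↦ hp ⟨y, hlt⟩
      exact mem_of_mem_nhds hU

theorem not_forall_isEllOneFamily [LinearOrder K] [OrderTopology K] [WellFoundedLT K]
    [OrderTop K] {δ : ℝ} (hδ : 0 < δ) (f : ℕ → C(K, ℝ)) :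
    ¬ ∀ n, IsEllOneFamily δ (fun i : Fin n ↦ f i) := by
  intro h
  have hf (n : ℕ) : ‖f n‖ ≤ 1 := (h (n + 1)).norm_le_one (Fin.last n)
  obtain ⟨M, -, g, hg, hgK⟩ := hasSmallBlocksOn_Iic hf ⊤ (δ / 2) (half_pos hδ) 0
  have hle : ‖g‖ ≤ δ / 2 := (ContinuousMap.norm_le g (half_pos hδ).le).2 fun y ↦ hgK y le_top
  linarith [(h M).mul_le_norm_of_mem_blockSums hg]

end ContinuousFunctions

section WellOrdered

variable {K : Type*} [TopologicalSpace K] [LinearOrder K] [OrderTopology K] [WellFoundedLT K]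

theorem isOpen_Iic (a : K) : IsOpen (Iic a) := by
  let := SuccOrder.ofLinearWellFoundedLT K
  by_cases ha : IsMax a
  · simp [ha.isTop.Iic_eq]
  · rw [← Order.Iio_succ_of_not_isMax ha]
    exact isOpen_Iio

theorem exists_Icc_mem_nhds_subset {y : K} {W : Set K} (hW : W ∈ 𝓝 y) :
    ∃ a, Icc a y ∈ 𝓝 y ∧ Icc a y ⊆ W := by
  let := SuccOrder.ofLinearWellFoundedLT K
  have hIic : Iic y ∈ 𝓝 y := (isOpen_Iic y).mem_nhds self_mem_Iic
  by_cases hy : ∃ q, q < y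
  · obtain ⟨q, hq, hqW⟩ := exists_Ioc_subset_of_mem_nhds hW hy
    refine ⟨Order.succ q, ?_⟩
    rw [Order.Icc_succ_left_of_not_isMax hq.not_isMax]
    exact ⟨Filter.inter_mem (Ioi_mem_nhds hq) hIic, hqW⟩
  · refine ⟨y, Filter.mem_of_superset hIic fun z hz ↦ ⟨not_lt.1 fun hlt ↦ hy ⟨z, hlt⟩, hz⟩, ?_⟩
    rw [Icc_self, singleton_subset_iff]
    exact mem_of_mem_nhds hW

end WellOrdered

section Codes

variable {K : Type v} [TopologicalSpace K] [CompactSpace K]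

theorem exists_finset_forall_abs_sub_lt {ι : Type*} {U : ι → Set K}
    (hU : ∀ y, ∀ W ∈ 𝓝 y, ∃ i, U i ∈ 𝓝 y ∧ U i ⊆ W) (f : C(K, ℝ)) {ε : ℝ} (hε : 0 < ε) :
    ∃ F : Finset (ι × ℚ), (∀ y, ∃ b ∈ F, y ∈ U b.1) ∧ ∀ b ∈ F, ∀ y ∈ U b.1, |f y - b.2| < ε := by
  classical
  have hlocal (y : K) : ∃ b : ι × ℚ, U b.1 ∈ 𝓝 y ∧ ∀ z ∈ U b.1, |f z - b.2| < ε := by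
    obtain ⟨q, hq⟩ := exists_rat_near (f y) hε
    have hopen : IsOpen {z | |f z - q| < ε} := isOpen_lt (by fun_prop) continuous_const
    obtain ⟨i, hi, hsub⟩ := hU y _ (hopen.mem_nhds hq)
    exact ⟨(i, q), hi, hsub⟩
  choose b hb hbf using hlocal
  obtain ⟨t, ht⟩ := CompactSpace.elim_nhds_subcover (fun y ↦ U (b y).1) hb
  refine ⟨t.image b, fun y ↦ ?_, by simpa using fun y _ ↦ hbf y⟩
  obtain ⟨x, hx, hyx⟩ := mem_iUnion₂.1 (ht.ge (mem_univ y))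
  exact ⟨b x, Finset.mem_image_of_mem b hx, hyx⟩

theorem exists_code_norm_sub_le {ι : Type*} {U : ι → Set K}
    (hU : ∀ y, ∀ W ∈ 𝓝 y, ∃ i, U i ∈ 𝓝 y ∧ U i ⊆ W) {ε : ℝ} (hε : 0 < ε) :
    ∃ code : C(K, ℝ) → Finset (ι × ℚ), ∀ f g, code f = code g → ‖f - g‖ ≤ ε := by
  choose code hcov hclose using fun f ↦ exists_finset_forall_abs_sub_lt hU f (half_pos hε)
  refine ⟨code, fun f g hfg ↦ (ContinuousMap.norm_le _ hε.le).2 fun y ↦ ?_⟩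
  obtain ⟨b, hb, hy⟩ := hcov f y
  have hf := hclose f b hb y hy
  have hg := hclose g b (hfg ▸ hb) y hy
  rw [abs_sub_comm] at hg
  calc |f y - g y| ≤ |f y - b.2| + |b.2 - g y| := abs_sub_le _ _ _
    _ ≤ ε := by linarith

theorem exists_lt_ord_forall_not_ellOneIndexGE_continuousMap [LinearOrder K] [OrderTopology K]
    [WellFoundedLT K] [OrderTop K] {c : Cardinal.{u}}
    (hc : c.IsRegular) (hc' : ℵ₀ < c) (hK : lift.{u} #K < lift.{v} c) :
    ∃ ξ < c.ord, ∀ δ > 0, ¬ EllOneIndexGE C(K, ℝ) δ ξ := by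
  have hcard : lift.{u} #(Finset ((K × K) × ℚ)) < lift.{v} c := by
    have hc₀ : ℵ₀ ≤ lift.{v} c := aleph0_le_lift.2 hc'.le
    rw [mk_finset_of_infinite]
    simp only [mk_prod, lift_mul, lift_id, lift_lift, Cardinal.mkRat, lift_aleph0]
    exact mul_lt_of_lt hc₀ (mul_lt_of_lt hc₀ hK hK) (aleph0_lt_lift.2 hc')
  exact exists_lt_ord_forall_not_ellOneIndexGE hc hc' hcard
    (fun ε hε ↦ exists_code_norm_sub_le (U := fun p : K × K ↦ Icc p.1 p.2)
      (fun y W hW ↦ (exists_Icc_mem_nhds_subset hW).imp' (·, y) fun _ h ↦ h) hε)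
    fun δ hδ f ↦ not_forall_isEllOneFamily hδ f

end Codes

section Doubling

variable {K L : Type*} [TopologicalSpace K] [TopologicalSpace L] [CompactSpace L]

/-- A witness that `L` covers `K` twice: the map `r : L → K` is onto already on each of
the sets `{s = 1}` and `{s = -1}`. -/
structure IsDoubling (r : C(L, K)) (s : C(L, ℝ)) : Prop where
  norm_le_one : ‖s‖ ≤ 1
  exists_eq_one : ∀ t, ∃ y, r y = t ∧ s y = 1
  exists_eq_neg_one : ∀ t, ∃ y, r y = t ∧ s y = -1

variable [CompactSpace K] [Nonempty K] {r : C(L, K)} {s : C(L, ℝ)}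

theorem IsDoubling.abs_add_norm_le (h : IsDoubling r s) (a : ℝ) (z : C(K, ℝ)) :
    |a| + ‖z‖ ≤ ‖a • s + z.comp r‖ := by
  rw [← le_sub_iff_add_le', ContinuousMap.norm_le_of_nonempty]
  intro t
  obtain ⟨y, hy, hsy⟩ := h.exists_eq_one t
  obtain ⟨y', hy', hsy'⟩ := h.exists_eq_neg_one t
  have hpos : |a + z t| ≤ ‖a • s + z.comp r‖ := by
    simpa [hy, hsy] using (a • s + z.comp r).norm_coe_le_norm y
  have hneg : |-a + z t| ≤ ‖a • s + z.comp r‖ := by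
    simpa [hy', hsy'] using (a • s + z.comp r).norm_coe_le_norm y'
  rw [Real.norm_eq_abs]
  grind

theorem IsDoubling.isEllOneFamily_cons (h : IsDoubling r s) {n : ℕ} {x : Fin n → C(K, ℝ)}
    (hx : IsEllOneFamily 1 x) :
    IsEllOneFamily 1 (Fin.cons s fun i ↦ (x i).comp r : Fin (n + 1) → C(L, ℝ)) where
  norm_le_one := Fin.cases h.norm_le_one fun i ↦
    (ContinuousMap.norm_le _ zero_le_one).2 fun y ↦
      ((x i).norm_coe_le_norm (r y)).trans (hx.norm_le_one i)
  le_norm_sum c := by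
    have hcomp : ∑ i : Fin n, c i.succ • (x i).comp r = (∑ i, c i.succ • x i).comp r := by
      ext y
      simp
    simp only [Fin.sum_univ_succ, Fin.cons_zero, Fin.cons_succ, hcomp, one_mul]
    have hle := hx.le_norm_sum fun i ↦ c i.succ
    linarith [h.abs_add_norm_le (c 0) (∑ i, c i.succ • x i)]

theorem IsDoubling.hasRankGE_snoc (h : IsDoubling r s) {η : Ordinal.{u}}
    (hη : EllOneIndexGE C(K, ℝ) 1 η) :
    HasRankGE (fun _ x ↦ IsEllOneFamily 1 x) η (Fin.snoc Fin.elim0 s : Fin 1 → C(L, ℝ)) := by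
  have hcons := HasRankGE.cons (T := fun _ x ↦ IsEllOneFamily 1 x) (a := s)
    (HasRankGE.map (·.comp r) (fun _ _ hx ↦ h.isEllOneFamily_cons hx) hη)
  convert hcons using 1
  ext i : 1
  rw [Fin.eq_zero i]
  rfl

end Doubling

section Ordinals

theorem continuous_ordinal_sub_const (β : Ordinal.{u}) :
    Continuous fun y : Ordinal.{u} ↦ y - β := by
  refine OrderTopology.continuous_iff.2 fun a ↦ ⟨?_, ?_⟩
  · convert isOpen_Ioi (a := β + a) using 1
    ext y
    exact Ordinal.lt_sub
  · rcases eq_or_ne a 0 with rfl | ha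
    · simp
    convert isOpen_Iio (a := β + a) using 1
    ext y
    exact ⟨fun hy ↦ (Ordinal.le_add_sub y β).trans_lt (add_lt_add_right hy β),
      fun hy ↦ Ordinal.sub_lt_of_lt_add hy (pos_iff_ne_zero.2 ha)⟩

theorem exists_isDoubling_of_add_le {β γ : Ordinal.{u}} (h : β + 1 + β ≤ γ) :
    ∃ (r : C(Iic γ, Iic β)) (s : C(Iic γ, ℝ)), IsDoubling r s := by
  have hclopen : IsClopen {y : Iic γ | y.1 ≤ β} :=
    IsClopen.preimage ⟨isClosed_Iic, isOpen_Iic β⟩ continuous_subtype_val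
  have hfrontier : ∀ y ∈ frontier {y : Iic γ | y.1 ≤ β}, False := by simp [hclopen.frontier_eq]
  let s : C(Iic γ, ℝ) := ⟨fun y ↦ if y.1 ≤ β then 1 else -1,
    continuous_const.if (fun y hy ↦ (hfrontier y hy).elim) continuous_const⟩
  let r : C(Iic γ, Iic β) := ⟨fun y ↦ ⟨min (if y.1 ≤ β then y.1 else y.1 - (β + 1)) β,
    mem_Iic.2 (min_le_right _ _)⟩, ((continuous_subtype_val.if (fun y hy ↦ (hfrontier y hy).elim)
      ((continuous_ordinal_sub_const _).comp continuous_subtype_val)).min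
        continuous_const).subtype_mk _⟩
  refine ⟨r, s, (ContinuousMap.norm_le _ zero_le_one).2 fun y ↦ ?_, fun t ↦ ?_, fun t ↦ ?_⟩
  · by_cases hy : y.1 ≤ β <;> simp [s, hy]
  · have ht : t.1 ≤ β := t.2
    have htγ : t.1 ≤ γ := ht.trans ((le_self_add.trans le_self_add).trans h)
    exact ⟨⟨t, htγ⟩, Subtype.ext (by simp [r, ht]), by simp [s, ht]⟩
  · have ht : t.1 ≤ β := t.2
    have hlt : β < β + 1 + t.1 := (lt_add_one β).trans_le le_self_add
    exact ⟨⟨β + 1 + t.1, (add_le_add_right ht (β + 1)).trans h⟩,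
      Subtype.ext (by simp [r, hlt.not_ge, ht]), by simp [s, hlt.not_ge]⟩

theorem ellOneIndexGE_one_of_opow_le {ξ γ : Ordinal.{u}} (h : ω ^ ξ ≤ γ) :
    EllOneIndexGE C(Iic γ, ℝ) 1 ξ := by
  induction ξ using WellFoundedLT.induction generalizing γ with
  | ind ξ ih =>
    refine hasRankGE_iff.2 ⟨⟨nofun, by simp⟩, fun η hη ↦ ?_⟩
    have hlt : ω ^ η < ω ^ ξ := (Ordinal.opow_lt_opow_iff_right Ordinal.one_lt_omega0).2 hη
    have hone : 1 ≤ ω ^ η := Order.one_le_iff_pos.2 (Ordinal.opow_pos η Ordinal.omega0_pos)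
    have hadd := Ordinal.isPrincipal_add_omega0_opow ξ
    have hle : ω ^ η + 1 + ω ^ η ≤ γ :=
      calc ω ^ η + 1 + ω ^ η ≤ ω ^ η + ω ^ η + ω ^ η := by gcongr
        _ ≤ ω ^ ξ := (hadd (hadd hlt hlt) hlt).le
        _ ≤ γ := h
    obtain ⟨r, s, hrs⟩ := exists_isDoubling_of_add_le hle
    exact ⟨s, hrs.hasRankGE_snoc (ih η hη le_rfl)⟩

theorem finrank_continuousMap_Iic_natCast (n : ℕ) :
    Module.finrank ℝ C(Iic (n : Ordinal.{u}), ℝ) = n + 1 := by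
  have hcard : Nat.card (Iic (n : Ordinal.{u})) = n + 1 := by
    rw [← Order.Iio_succ, Nat.card, mk_Iio_ordinal]
    simp
  have : Finite (Iic (n : Ordinal.{u})) := Nat.finite_of_card_ne_zero (by simp [hcard])
  have := Fintype.ofFinite (Iic (n : Ordinal.{u}))
  let e : C(Iic (n : Ordinal.{u}), ℝ) ≃ₗ[ℝ] (Iic (n : Ordinal.{u}) → ℝ) :=
    { ContinuousMap.equivFnOfDiscrete with
      map_add' := fun _ _ ↦ rfl
      map_smul' := fun _ _ ↦ rfl }
  rw [e.finrank_eq, Module.finrank_fintype_fun_eq_card, ← Nat.card_eq_fintype_card, hcard]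

theorem exists_lt_ord_forall_equiv_lt {c : Cardinal.{u}} (hc : c.IsRegular) {α : Ordinal.{u}}
    (hα : α < c.ord) : ∃ β < c.ord, ∀ γ < c.ord,
      Nonempty (C(Iic α, ℝ) ≃L[ℝ] C(Iic γ, ℝ)) → γ < β := by
  rcases hc.aleph0_le.eq_or_lt with rfl | hc'
  · rw [ord_aleph0] at hα ⊢
    obtain ⟨m, rfl⟩ := Ordinal.lt_omega0.1 hα
    refine ⟨_, Ordinal.natCast_lt_omega0 (m + 1), fun γ hγ ⟨e⟩ ↦ ?_⟩
    obtain ⟨n, rfl⟩ := Ordinal.lt_omega0.1 hγ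
    have := e.toLinearEquiv.finrank_eq
    rw [finrank_continuousMap_Iic_natCast, finrank_continuousMap_Iic_natCast] at this
    exact_mod_cast this.ge
  · have hcard : lift.{u} #(Iic α) < lift.{u + 1} c := by
      rw [← Order.Iio_succ, mk_Iio_ordinal, lift_id'.{u, u + 1}, lift_lt]
      exact lt_ord.1 ((isSuccLimit_ord hc.aleph0_le).succ_lt hα)
    obtain ⟨ξ, hξ, hnot⟩ := exists_lt_ord_forall_not_ellOneIndexGE_continuousMap hc hc' hcard
    have hω : ω < c.ord := ord_aleph0 ▸ ord_lt_ord.2 hc'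
    refine ⟨ω ^ ξ, Ordinal.isPrincipal_opow_ord hc'.le hω hξ,
      fun γ _ ⟨e⟩ ↦ lt_of_not_ge fun hγ ↦ ?_⟩
    obtain ⟨δ, hδ, hidx⟩ := exists_pos_forall_ellOneIndexGE_of_equiv e.symm one_pos
    exact hnot δ hδ (hidx ξ (ellOneIndexGE_one_of_opow_le hγ))

theorem lift_le_mk_of_forall_bddAbove_fiber {c : Cardinal.{u}} (hc : c.IsRegular) {Q : Type v}
    (g : Iio c.ord → Q) (hg : ∀ a, ∃ β < c.ord, ∀ b, g b = g a → b.1 < β) :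
    lift.{v} c ≤ lift.{u} #Q := by
  by_contra! hQ
  have hfib (q : Q) : ∃ β < c.ord, ∀ b, g b = q → b.1 < β := by
    by_cases hq : ∃ a, g a = q
    · obtain ⟨a, rfl⟩ := hq
      exact hg a
    · exact ⟨0, hc.ord_pos, fun b hb ↦ (hq ⟨b, hb⟩).elim⟩
  choose β hβ hlt using hfib
  obtain ⟨b, hb, hle⟩ := exists_lt_ord_forall_le hc hQ hβ
  exact (hlt _ ⟨b, hb⟩ rfl).not_ge (hle _)

theorem lift_le_mk_quotient {c lam : Cardinal.{u}} (hc : c.IsRegular) (hle : c ≤ lam) :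
    lift.{u + 1} c ≤ #(Quotient (banachIsoSetoid lam)) := by
  rw [← lift_id'.{u, u + 1} #(Quotient _)]
  refine lift_le_mk_of_forall_bddAbove_fiber hc
    (fun a ↦ ⟦⟨a.1, a.2.trans_le (ord_le_ord.2 hle)⟩⟧) fun a ↦ ?_
  obtain ⟨β, hβ, hlt⟩ := exists_lt_ord_forall_equiv_lt hc a.2
  exact ⟨β, hβ, fun b hb ↦ hlt b b.2 (Quotient.exact hb.symm)⟩

end Ordinals

end BourgainIndex

/-- For every infinite cardinal `λ`, the set of ordinals `α < λ`, considered up to the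
equivalence identifying `α` and `β` whenever the Banach spaces `C([0,α], ℝ)` and `C([0,β], ℝ)`
are isomorphic, has exactly `λ` equivalence classes. -/
theorem statement8 (lam : Cardinal.{u}) (hlam : Cardinal.aleph0 ≤ lam) :
    #(Quotient (banachIsoSetoid lam)) = Cardinal.lift.{u + 1} lam := by
  refine le_antisymm ?_ (le_of_forall_lt fun μ hμ ↦ ?_)
  · calc #(Quotient (banachIsoSetoid lam)) ≤ #(Set.Iio lam.ord) := mk_quotient_le
      _ = lift.{u + 1} lam := by rw [mk_Iio_ordinal, card_ord]
  · obtain ⟨κ, hκ, rfl⟩ := Cardinal.lt_lift_iff.1 hμ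
    have hregular : ∃ c : Cardinal.{u}, c.IsRegular ∧ κ < c ∧ c ≤ lam := by
      rcases lt_or_ge κ ℵ₀ with hfin | hinf
      · exact ⟨ℵ₀, isRegular_aleph0, hfin, hlam⟩
      · exact ⟨Order.succ κ, isRegular_succ hinf, Order.lt_succ κ, Order.succ_le_of_lt hκ⟩
    obtain ⟨c, hc, hκc, hle⟩ := hregular
    exact (lift_lt.2 hκc).trans_le (BourgainIndex.lift_le_mk_quotient hc hle)
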